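/- The comparison maps φ_*, ψ_* and the homotopy ω_{*+1} all preserve the filtrations: φ_n(F^i(X_n)) ⊆ F^i(B_n(E)), ψ_n(F^i(B_n(E))) ⊆ F^i(X_n), and ω_{n+1}(F^i(B_n(E))) ⊆ F^i(B_{n+1}(E)) for all n ≥ 0 and i ≥ 0. -/

import Mathlib

open TensorProduct DirectSum

set_option maxHeartbeats 1000000
set_option maxSynthPendingDepth 3
set_option synthInstance.maxHeartbeats 400000

noncomputable section

namespace HopfCrossed

variable (k : Type) [CommRing k]

def TpowCat (V : ModuleCat k) : ℕ → ModuleCat k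
  | 0 => ModuleCat.of k k
  | n + 1 => ModuleCat.of k (V ⊗[k] (TpowCat V n))

abbrev Tpow (V : Type) [AddCommGroup V] [Module k V] (n : ℕ) : Type :=
  TpowCat k (ModuleCat.of k V) n

def tp {V : Type} [AddCommGroup V] [Module k V] : ∀ {n : ℕ}, (Fin n → V) → Tpow k V n
  | 0, _ => (1 : k)
  | _ + 1, v => (v 0) ⊗ₜ[k] (tp fun i => v i.succ)

section Coalg
variable {H : Type} [AddCommGroup H] [Module k H]

def itComul [Coalgebra k H] : ∀ n : ℕ, H →ₗ[k] Tpow k H (n + 1)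
  | 0 => (TensorProduct.rid k H).symm.toLinearMap
  | n + 1 =>
      (TensorProduct.map LinearMap.id (itComul n)) ∘ₗ (Coalgebra.comul (R := k))

def SRep [Coalgebra k H] (n : ℕ) (h : H) (N : ℕ) (u : Fin N → Fin (n + 1) → H) : Prop :=
  itComul k n h = ∑ i, tp k (u i)

def iterAct {A : Type} [AddCommGroup A] [Module k A]
    (act : H →ₗ[k] A →ₗ[k] A) : ∀ {s : ℕ}, (Fin s → H) → A → A
  | 0, _, a => a
  | _ + 1, h, a => act (h 0) (iterAct act (fun i => h i.succ) a)

end Coalg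

/-- A weak action of a Hopf algebra `H` on a `k`-algebra `A` (Blattner–Cohen–Montgomery,
Doi–Takeuchi), written `act h a = a^h`. -/
structure WeakAction (k A H : Type) [CommRing k] [Ring A] [Algebra k A] [Ring H] [HopfAlgebra k H] : Type where
  act : H →ₗ[k] A →ₗ[k] A
  act_mul : ∀ (h : H) (a b : A) (N : ℕ) (u : Fin N → Fin 2 → H), SRep k 1 h N u →
    act h (a * b) = ∑ i, act (u i 0) a * act (u i 1) b
  act_one : ∀ h : H, act h 1 = Coalgebra.counit (R := k) h • (1 : A)
  one_act : ∀ a : A, act 1 a = a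

variable {A H : Type} [Ring A] [Algebra k A] [Ring H] [HopfAlgebra k H]
variable {k}

/-- Normality of the cocycle `f`. -/
def IsNormal (f : H →ₗ[k] H →ₗ[k] A) : Prop :=
  ∀ h : H, f h 1 = Coalgebra.counit (R := k) h • (1 : A) ∧
    f 1 h = Coalgebra.counit (R := k) h • (1 : A)

/-- The cocycle condition
`f(l⁽¹⁾,m⁽¹⁾)^{h⁽¹⁾} f(h⁽²⁾, l⁽²⁾m⁽²⁾) = f(h⁽¹⁾,l⁽¹⁾) f(h⁽²⁾l⁽²⁾, m)`. -/
def IsCocycle (W : WeakAction k A H) (f : H →ₗ[k] H →ₗ[k] A) : Prop :=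
  ∀ (h l m : H) (N₁ N₂ N₃ : ℕ) (u : Fin N₁ → Fin 2 → H) (v : Fin N₂ → Fin 2 → H)
    (w : Fin N₃ → Fin 2 → H),
    SRep k 1 h N₁ u → SRep k 1 l N₂ v → SRep k 1 m N₃ w →
    (∑ i, ∑ j, ∑ p, W.act (u i 0) (f (v j 0) (w p 0)) * f (u i 1) (v j 1 * w p 1)) =
      ∑ i, ∑ j, f (u i 0) (v j 0) * f (u i 1 * v j 1) m

/-- The twisted module condition
`(a^{l⁽¹⁾})^{h⁽¹⁾} f(h⁽²⁾,l⁽²⁾) = f(h⁽¹⁾,l⁽¹⁾) a^{h⁽²⁾l⁽²⁾}`. -/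
def IsTwistedModule (W : WeakAction k A H) (f : H →ₗ[k] H →ₗ[k] A) : Prop :=
  ∀ (h l : H) (a : A) (N₁ N₂ : ℕ) (u : Fin N₁ → Fin 2 → H) (v : Fin N₂ → Fin 2 → H),
    SRep k 1 h N₁ u → SRep k 1 l N₂ v →
    (∑ i, ∑ j, W.act (u i 0) (W.act (v j 0) a) * f (u i 1) (v j 1)) =
      ∑ i, ∑ j, f (u i 0) (v j 0) * W.act (u i 1 * v j 1) a

variable (k A H) in
/-- A crossed product `E = A #_f H` of `A` by `H`:  a ring `E` identified with `A ⊗ H`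
as a `k`-module, whose multiplication is given by the crossed product formula
`(a # h)(b # l) = a b^{h⁽¹⁾} f(h⁽²⁾,l⁽¹⁾) # h⁽³⁾ l⁽²⁾`. -/
structure CrossedProduct (E : Type) [Ring E] [Algebra k E] extends WeakAction k A H where
  f : H →ₗ[k] H →ₗ[k] A
  ι : (A ⊗[k] H) ≃ₗ[k] E
  ι_one : ι (1 ⊗ₜ[k] 1) = 1
  ι_mul : ∀ (a b : A) (h l : H) (N M : ℕ) (u : Fin N → Fin 3 → H) (v : Fin M → Fin 2 → H),
    SRep k 2 h N u → SRep k 1 l M v →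
    ι (a ⊗ₜ[k] h) * ι (b ⊗ₜ[k] l) =
      ∑ i, ∑ j, ι ((a * act (u i 0) b * f (u i 1) (v j 0)) ⊗ₜ[k] (u i 2 * v j 1))
  f_normal : IsNormal f
  f_cocycle : IsCocycle toWeakAction f
  f_twisted : IsTwistedModule toWeakAction f

namespace CrossedProduct

variable {E : Type} [Ring E] [Algebra k E] (S : CrossedProduct k A H E)

/-- The canonical map `A → E`, `a ↦ a # 1`. -/
def aE : A →ₗ[k] E := S.ι.toLinearMap ∘ₗ (TensorProduct.mk k A H).flip 1

/-- The canonical map `H → E`, `h ↦ 1 # h`. -/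
def hE : H →ₗ[k] E := S.ι.toLinearMap ∘ₗ (TensorProduct.mk k A H) 1

end CrossedProduct


section Hochschild

variable (k) in
/-- For a `k`-algebra `B`, the submodule `k·1 ⊆ B`. -/
abbrev unitSub (B : Type) [Ring B] [Algebra k B] : Submodule k B :=
  LinearMap.range (Algebra.linearMap k B)

variable (k) in
/-- `B̄ = B/k`. -/
abbrev Qbar (B : Type) [Ring B] [Algebra k B] : Type := B ⧸ unitSub k B

variable (k) in
/-- The canonical projection `B → B̄`. -/
abbrev qbar (B : Type) [Ring B] [Algebra k B] : B →ₗ[k] Qbar k B :=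
  (unitSub k B).mkQ

/-- A `B`-bimodule structure (with commuting `k`-linear left and right actions)
on a `k`-module `M`. -/
structure Bimod (k B M : Type) [CommRing k] [Ring B] [Algebra k B]
    [AddCommGroup M] [Module k M] : Type where
  l : B →ₗ[k] M →ₗ[k] M
  r : B →ₗ[k] M →ₗ[k] M
  l_one : l 1 = LinearMap.id
  r_one : r 1 = LinearMap.id
  l_mul : ∀ x y : B, l (x * y) = l x ∘ₗ l y
  r_mul : ∀ x y : B, r (x * y) = r y ∘ₗ r x
  lr_comm : ∀ x y : B, l x ∘ₗ r y = r y ∘ₗ l x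

/-- Replace the `r`-tuple `a` by the `(r-1)`-tuple obtained by multiplying the
`i`-th and `(i+1)`-st entries. -/
def mulAt {A : Type} [Mul A] {r : ℕ} (a : Fin (r + 1) → A) (i : Fin r) (j : Fin r) : A :=
  if (j : ℕ) < (i : ℕ) then a j.castSucc
  else if (j : ℕ) = (i : ℕ) then a j.castSucc * a j.succ else a j.succ

variable (k) in
/-- The degree-`n` part `M ⊗ B̄^{⊗n}` of the normalized Hochschild chain complex. -/
abbrev HCh (B M : Type) [Ring B] [Algebra k B] [AddCommGroup M] [Module k M]
    (n : ℕ) : Type :=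
  M ⊗[k] Tpow k (Qbar k B) n

variable (k) in
/-- `IsHochschildD l r bd` says that `bd` is the differential of the normalized
Hochschild chain complex of `B` with coefficients in the bimodule `M` (with left
action `l` and right action `r`):
`b(m ⊗ x₁ ⊗ ⋯ ⊗ xₙ) = m x₁ ⊗ x₂ ⊗ ⋯ + ∑ (-1)^i m ⊗ ⋯ ⊗ xᵢxᵢ₊₁ ⊗ ⋯ + (-1)^n xₙ m ⊗ x₁ ⊗ ⋯ ⊗ xₙ₋₁`. -/
def IsHochschildD {B M : Type} [Ring B] [Algebra k B] [AddCommGroup M] [Module k M]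
    (l r : B →ₗ[k] M →ₗ[k] M)
    (bd : ∀ n : ℕ, HCh k B M (n + 1) →ₗ[k] HCh k B M n) : Prop :=
  ∀ (n : ℕ) (m : M) (x : Fin (n + 1) → B),
    bd n (m ⊗ₜ[k] tp k (fun i => qbar k B (x i))) =
      r (x 0) m ⊗ₜ[k] tp k (fun i : Fin n => qbar k B (x i.succ))
      + (∑ i : Fin n, ((-1 : ℤ) ^ ((i : ℕ) + 1)) •
          (m ⊗ₜ[k] tp k (fun j => qbar k B (mulAt x i j))))
      + ((-1 : ℤ) ^ (n + 1)) •
          (l (x (Fin.last n)) m ⊗ₜ[k] tp k (fun i : Fin n => qbar k B (x i.castSucc)))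

variable (k) in
/-- The homology of a (not necessarily everywhere-defined) chain complex
`⋯ → C (n+1) → C n → ⋯ → C 0`; in degree `n+1` it is `ker (d n) / im (d (n+1))`, and in
degree `0` it is `C 0 / im (d 0)`. -/
def Hml {C : ℕ → Type} [∀ n, AddCommGroup (C n)] [∀ n, Module k (C n)]
    (d : ∀ n : ℕ, C (n + 1) →ₗ[k] C n) : ℕ → Type
  | 0 => C 0 ⧸ LinearMap.range (d 0)
  | n + 1 => LinearMap.ker (d n) ⧸
      (LinearMap.range (d (n + 1))).comap (LinearMap.ker (d n)).subtype

instance {C : ℕ → Type} [∀ n, AddCommGroup (C n)] [∀ n, Module k (C n)]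
    (d : ∀ n : ℕ, C (n + 1) →ₗ[k] C n) : ∀ n, AddCommGroup (Hml k d n)
  | 0 => inferInstanceAs (AddCommGroup (C 0 ⧸ LinearMap.range (d 0)))
  | n + 1 => inferInstanceAs (AddCommGroup (LinearMap.ker (d n) ⧸
      (LinearMap.range (d (n + 1))).comap (LinearMap.ker (d n)).subtype))

instance {C : ℕ → Type} [∀ n, AddCommGroup (C n)] [∀ n, Module k (C n)]
    (d : ∀ n : ℕ, C (n + 1) →ₗ[k] C n) : ∀ n, Module k (Hml k d n)
  | 0 => inferInstanceAs (Module k (C 0 ⧸ LinearMap.range (d 0)))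
  | n + 1 => inferInstanceAs (Module k (LinearMap.ker (d n) ⧸
      (LinearMap.range (d (n + 1))).comap (LinearMap.ker (d n)).subtype))

end Hochschild

section Conv

variable {A H : Type} [Ring A] [Algebra k A] [Ring H] [HopfAlgebra k H]

/-- `IsConvInverse f g` : `g` is the convolution inverse of `f` in the convolution
algebra `Hom_k(H ⊗ H, A)`, i.e. `f * g = g * f = ε ⊗ ε · 1_A`. -/
def IsConvInverse (f g : H →ₗ[k] H →ₗ[k] A) : Prop :=
  ∀ (h l : H) (N M' : ℕ) (u : Fin N → Fin 2 → H) (v : Fin M' → Fin 2 → H),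
    SRep k 1 h N u → SRep k 1 l M' v →
    (∑ i, ∑ j, f (u i 0) (v j 0) * g (u i 1) (v j 1)) =
        (Coalgebra.counit (R := k) h * Coalgebra.counit (R := k) l) • (1 : A) ∧
    (∑ i, ∑ j, g (u i 0) (v j 0) * f (u i 1) (v j 1)) =
        (Coalgebra.counit (R := k) h * Coalgebra.counit (R := k) l) • (1 : A)

variable {E : Type} [Ring E] [Algebra k E]

/-- The elementary term `f⁻¹(S(y), z) # S(x)` appearing in the formula for the
convolution inverse `(1 # h)⁻¹ = f⁻¹(S(h⁽²⁾), h⁽³⁾) # S(h⁽¹⁾)`. -/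
def ginv (S : CrossedProduct k A H E) (finv : H →ₗ[k] H →ₗ[k] A) (x y z : H) : E :=
  S.ι ((finv (HopfAlgebra.antipode (R := k) y) z) ⊗ₜ[k] HopfAlgebra.antipode (R := k) x)

end Conv

section Bar

variable {H : Type} [Ring H] [HopfAlgebra k H]

variable (k) in
/-- The degree-`s` part `H̄^{⊗s} ⊗ N` of the normalized bar complex computing
`H_*(H, N) = Tor_*^H(k, N)`, i.e. `(H̄^* ⊗ H, d_*) ⊗_H N`. -/
abbrev BarCh (N : Type) [AddCommGroup N] [Module k N] (s : ℕ) : Type :=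
  Tpow k (Qbar k H) s ⊗[k] N

variable (k) in
/-- `IsBarD act d` : `d` is the differential of the normalized bar complex computing the
homology `H_*(H, N)` of `H` with coefficients in the left `H`-module `N` (action `act`). -/
def IsBarD {N : Type} [AddCommGroup N] [Module k N] (act : H →ₗ[k] N →ₗ[k] N)
    (d : ∀ s : ℕ, BarCh k (H := H) N (s + 1) →ₗ[k] BarCh k (H := H) N s) : Prop :=
  ∀ (s : ℕ) (h : Fin (s + 1) → H) (n : N),
    d s (tp k (fun i => qbar k H (h i)) ⊗ₜ[k] n) =
      Coalgebra.counit (R := k) (h 0) •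
          (tp k (fun i : Fin s => qbar k H (h i.succ)) ⊗ₜ[k] n)
      + (∑ i : Fin s, ((-1 : ℤ) ^ ((i : ℕ) + 1)) •
          (tp k (fun j => qbar k H (mulAt h i j)) ⊗ₜ[k] n))
      + ((-1 : ℤ) ^ (s + 1)) •
          (tp k (fun i : Fin s => qbar k H (h i.castSucc)) ⊗ₜ[k] act (h (Fin.last s)) n)

end Bar

section Sep

variable {A : Type} [Ring A] [Algebra k A]

variable (k A) in
/-- `A` is a separable `k`-algebra: the multiplication map `A ⊗ A → A` admits an
`A`-bimodule splitting (equivalently, `A` is projective as an `A ⊗ Aᵒᵖ`-module). -/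
def IsSeparableAlg : Prop :=
  ∃ s : A →ₗ[k] A ⊗[k] A,
    (LinearMap.mul' k A) ∘ₗ s = LinearMap.id ∧
    ∀ (a b x : A), s (a * x * b) =
      TensorProduct.map (LinearMap.mulLeft k a) (LinearMap.mulRight k b) (s x)

end Sep


section Resolution

variable (k A H E : Type) [CommRing k] [Ring A] [Algebra k A] [Ring H] [HopfAlgebra k H]
  [Ring E] [Algebra k E]

/-- The `E`-bimodule `X_{rs} = E ⊗ H̄^{⊗s} ⊗ Ā^{⊗r} ⊗ E`. -/
abbrev Xc (r s : ℕ) : Type :=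
  E ⊗[k] (Tpow k (Qbar k H) s ⊗[k] (Tpow k (Qbar k A) r ⊗[k] E))

/-- The `E`-bimodule `Y_s = E ⊗ H̄^{⊗s} ⊗ H`. -/
abbrev Yc (s : ℕ) : Type := E ⊗[k] (Tpow k (Qbar k H) s ⊗[k] H)

variable {k A H E}

/-- The generator `e ⊗ h̄₁ ⊗ ⋯ ⊗ h̄ₛ ⊗ ā₁ ⊗ ⋯ ⊗ āᵣ ⊗ e'` of `X_{rs}`. -/
def xgen (e : E) {s r : ℕ} (hs : Fin s → H) (as : Fin r → A) (e' : E) : Xc k A H E r s :=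
  e ⊗ₜ[k] (tp k (fun i => qbar k H (hs i)) ⊗ₜ[k] (tp k (fun i => qbar k A (as i)) ⊗ₜ[k] e'))

/-- The generator `e ⊗ h̄₁ ⊗ ⋯ ⊗ h̄ₛ ⊗ h` of `Y_s`. -/
def ygen (e : E) {s : ℕ} (hs : Fin s → H) (h : H) : Yc k H E s :=
  e ⊗ₜ[k] (tp k (fun i => qbar k H (hs i)) ⊗ₜ[k] h)

/-- Left multiplication by `e ∈ E` on `X_{rs}`. -/
def lX (e : E) {r s : ℕ} : Xc k A H E r s →ₗ[k] Xc k A H E r s :=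
  TensorProduct.map (LinearMap.mulLeft k e) LinearMap.id

/-- Right multiplication by `e ∈ E` on `X_{rs}`. -/
def rX (e : E) {r s : ℕ} : Xc k A H E r s →ₗ[k] Xc k A H E r s :=
  TensorProduct.map LinearMap.id (TensorProduct.map LinearMap.id
    (TensorProduct.map LinearMap.id (LinearMap.mulRight k e)))

/-- Transport along equalities of indices. -/
def xcast {r r' s s' : ℕ} (hr : r = r') (hs : s = s') :
    Xc k A H E r s →ₗ[k] Xc k A H E r' s' := by
  subst hr; subst hs; exact LinearMap.id

end Resolution

section ResData

variable {k A H E : Type} [CommRing k] [Ring A] [Algebra k A] [Ring H] [HopfAlgebra k H]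
  [Ring E] [Algebra k E]

variable (k A H E) in
/-- The resolution `(X_*, d_*)` of the crossed product `E = A #_f H` of Section 1 of
the paper: the maps `μ_s`, `∂_s`, `σ⁰`, and the (higher) differentials `d^l_{rs}`
(`d⁰ = dl 0`), together with all of their defining equations.  Here
`dl l r s : X_{rs} → X_{r+l-1, s-l}`. -/
structure ResData (S : CrossedProduct k A H E) : Type where
  mu : ∀ s : ℕ, Xc k A H E 0 s →ₗ[k] Yc k H E s
  del : ∀ s : ℕ, Yc k H E (s + 1) →ₗ[k] Yc k H E s
  sig0 : ∀ s : ℕ, Yc k H E s →ₗ[k] Xc k A H E 0 s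
  sig : ∀ r s : ℕ, Xc k A H E r s →ₗ[k] Xc k A H E (r + 1) s
  dl : ∀ l r s : ℕ, Xc k A H E r s →ₗ[k] Xc k A H E (r + l - 1) (s - l)
  /-- `μ_s(a₀ ⊗ 𝐡_{0s} ⊗ a₁ ⊗ h_{s+1}) = a₀ a₁^{𝐡_{0s}⁽¹⁾} ⊗ 𝐡_{0s}⁽²⁾ ⊗ h_{s+1}`. -/
  mu_eq : ∀ (s : ℕ) (a₀ : A) (h₀ : H) (hs : Fin s → H) (b : A) (h' : H)
    (Nv : Fin (s + 1) → ℕ) (v : ∀ i, Fin (Nv i) → Fin 2 → H),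
    (∀ i, SRep k 1 ((Fin.cons h₀ hs : Fin (s + 1) → H) i) (Nv i) (v i)) →
    mu s (xgen (S.ι (a₀ ⊗ₜ[k] h₀)) hs (fun i : Fin 0 => i.elim0) (S.ι (b ⊗ₜ[k] h'))) =
      ∑ c : (∀ i, Fin (Nv i)),
        ygen (S.ι ((a₀ * iterAct k S.act (fun i => v i (c i) 0) b) ⊗ₜ[k] (v 0 (c 0) 1)))
          (fun i : Fin s => v i.succ (c i.succ) 1) h'
  /-- `d⁰_{rs}` is the Hochschild-type boundary in the `A`-direction. -/
  d0_eq : ∀ (r s : ℕ) (a₀ : A) (h₀ : H) (hs : Fin s → H) (as : Fin (r + 1) → A)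
    (b : A) (h' : H) (Nv : Fin (s + 1) → ℕ) (v : ∀ i, Fin (Nv i) → Fin 2 → H),
    (∀ i, SRep k 1 ((Fin.cons h₀ hs : Fin (s + 1) → H) i) (Nv i) (v i)) →
    dl 0 (r + 1) s (xgen (S.ι (a₀ ⊗ₜ[k] h₀)) hs as (S.ι (b ⊗ₜ[k] h'))) =
      (∑ c : (∀ i, Fin (Nv i)),
        xgen (S.ι ((a₀ * iterAct k S.act (fun i => v i (c i) 0) (as 0)) ⊗ₜ[k] (v 0 (c 0) 1)))
          (fun i : Fin s => v i.succ (c i.succ) 1)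
          (fun i : Fin r => as i.succ) (S.ι (b ⊗ₜ[k] h')))
      + (∑ i : Fin r, ((-1 : ℤ) ^ ((i : ℕ) + 1)) •
          xgen (S.ι (a₀ ⊗ₜ[k] h₀)) hs (mulAt as i) (S.ι (b ⊗ₜ[k] h')))
      + ((-1 : ℤ) ^ (r + 1)) •
          xgen (S.ι (a₀ ⊗ₜ[k] h₀)) hs (fun i : Fin r => as i.castSucc)
            (S.ι ((as (Fin.last r) * b) ⊗ₜ[k] h'))
  /-- `∂_s(a ⊗ 𝐡) = ∑ᵢ (-1)^{i+1} a f(hᵢ⁽¹⁾, hᵢ₊₁⁽¹⁾)^{𝐡_{0,i-1}⁽¹⁾} ⊗ 𝐡_{0,i-1}⁽²⁾ ⊗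
  hᵢ⁽²⁾hᵢ₊₁⁽²⁾ ⊗ 𝐡_{i+2,s+1}`. -/
  del_eq : ∀ (s : ℕ) (a : A) (h₀ : H) (hs : Fin (s + 1) → H) (h' : H)
    (Nv : Fin (s + 3) → ℕ) (v : ∀ i, Fin (Nv i) → Fin 2 → H),
    (∀ i, SRep k 1 ((Fin.cons h₀ (Fin.snoc hs h') : Fin (s + 3) → H) i) (Nv i) (v i)) →
    del s (ygen (S.ι (a ⊗ₜ[k] h₀)) hs h') =
      ∑ i : Fin (s + 2), ((-1 : ℤ) ^ ((i : ℕ) + 1)) •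
        (∑ c : (∀ j : Fin ((i : ℕ) + 2),
            Fin (Nv ⟨(j : ℕ), by have := j.isLt; have := i.isLt; omega⟩)),
          ygen
            (S.ι ((a * iterAct k S.act
                (fun j : Fin (i : ℕ) =>
                  v ⟨(j : ℕ), by have := j.isLt; have := i.isLt; omega⟩
                    (c ⟨(j : ℕ), by have := j.isLt; have := i.isLt; omega⟩) 0)
                (S.f (v ⟨(i : ℕ), by have := i.isLt; omega⟩
                        (c ⟨(i : ℕ), by omega⟩) 0)
                     (v ⟨(i : ℕ) + 1, by have := i.isLt; omega⟩
                        (c ⟨(i : ℕ) + 1, by omega⟩) 0))) ⊗ₜ[k]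
              (if (i : ℕ) = 0 then
                  (v ⟨0, by omega⟩ (c ⟨0, by omega⟩) 1) * (v ⟨1, by omega⟩ (c ⟨1, by omega⟩) 1)
                else v ⟨0, by omega⟩ (c ⟨0, by omega⟩) 1)))
            (fun p : Fin s =>
              if hp : (p : ℕ) + 1 < (i : ℕ) then
                v ⟨(p : ℕ) + 1, by have := p.isLt; have := i.isLt; omega⟩
                  (c ⟨(p : ℕ) + 1, by omega⟩) 1
              else if hp' : (p : ℕ) + 1 = (i : ℕ) then
                (v ⟨(p : ℕ) + 1, by have := p.isLt; omega⟩ (c ⟨(p : ℕ) + 1, by omega⟩) 1) *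
                  (v ⟨(p : ℕ) + 2, by have := p.isLt; have := i.isLt; omega⟩
                    (c ⟨(p : ℕ) + 2, by omega⟩) 1)
              else (Fin.cons h₀ (Fin.snoc hs h') : Fin (s + 3) → H) ⟨(p : ℕ) + 2, by have := p.isLt; omega⟩)
            (if hi : (i : ℕ) = s + 1 then
                (v ⟨s + 1, by omega⟩ (c ⟨s + 1, by omega⟩) 1) *
                  (v ⟨s + 2, by omega⟩ (c ⟨s + 2, by omega⟩) 1)
              else (Fin.cons h₀ (Fin.snoc hs h') : Fin (s + 3) → H) ⟨s + 2, by omega⟩))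
  /-- `σ⁰_{0,s}(a₀ ⊗ 𝐡 ⊗ h_{s+1}) = a₀ ⊗ 𝐡 ⊗ 1 # h_{s+1}`. -/
  sig0_eq : ∀ (s : ℕ) (e : E) (hs : Fin s → H) (h : H),
    sig0 s (ygen e hs h) = xgen e hs (fun i : Fin 0 => i.elim0) (S.hE h)
  /-- `σ⁰_{r+1,s}(a₀ ⊗ 𝐡 ⊗ 𝐚 ⊗ a # h) = (-1)^{r+1} a₀ ⊗ 𝐡 ⊗ 𝐚 ⊗ ā ⊗ 1 # h`. -/
  sig_eq : ∀ (r s : ℕ) (e : E) (hs : Fin s → H) (as : Fin r → A) (b : A) (h' : H),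
    sig r s (xgen e hs as (S.ι (b ⊗ₜ[k] h'))) =
      ((-1 : ℤ) ^ (r + 1)) • xgen e hs (Fin.snoc as b) (S.hE h')
  /-- `d¹_{0s} = -σ⁰ ∘ ∂ ∘ μ` on `k ⊗ H̄^s ⊗ k`. -/
  dl_one_zero : ∀ (s : ℕ) (hs : Fin (s + 1) → H),
    dl 1 0 (s + 1) (xgen (1 : E) hs (fun i : Fin 0 => i.elim0) (1 : E)) =
      - sig0 s (del s (mu (s + 1) (xgen (1 : E) hs (fun i : Fin 0 => i.elim0) (1 : E))))
  /-- `d^l_{0s} = -∑_{j=1}^{l-1} σ⁰ ∘ d^{l-j} ∘ d^j` on `k ⊗ H̄^s ⊗ k`, for `1 < l ≤ s`. -/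
  dl_zero : ∀ (l s : ℕ) (hl : 2 ≤ l) (hls : l ≤ s) (hs : Fin s → H),
    dl l 0 s (xgen (1 : E) hs (fun i : Fin 0 => i.elim0) (1 : E)) =
      - ∑ j : Fin (l - 1),
        xcast (show (l - 2) + 1 = 0 + l - 1 by omega) rfl
          (sig (l - 2) (s - l)
            (xcast
              (show (j : ℕ) + (l - ((j : ℕ) + 1)) - 1 = l - 2 by
                have := j.isLt; omega)
              (show (s - ((j : ℕ) + 1)) - (l - ((j : ℕ) + 1)) = s - l by
                have := j.isLt; omega)
              (dl (l - ((j : ℕ) + 1)) ((j : ℕ)) (s - ((j : ℕ) + 1))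
                (xcast (show 0 + ((j : ℕ) + 1) - 1 = (j : ℕ) by omega) rfl
                  (dl ((j : ℕ) + 1) 0 s
                    (xgen (1 : E) hs (fun i : Fin 0 => i.elim0) (1 : E)))))))
  /-- `d^l_{rs} = -∑_{j=0}^{l-1} σ⁰ ∘ d^{l-j} ∘ d^j` on `k ⊗ H̄^s ⊗ Ā^r ⊗ k`, for `r > 0`,
  `1 ≤ l ≤ s`. -/
  dl_succ : ∀ (l r s : ℕ) (hl : 1 ≤ l) (hls : l ≤ s) (hs : Fin s → H) (as : Fin (r + 1) → A),
    dl l (r + 1) s (xgen (1 : E) hs as (1 : E)) =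
      - ∑ j : Fin l,
        xcast (show (r + l - 1) + 1 = (r + 1) + l - 1 by omega) rfl
          (sig (r + l - 1) (s - l)
            (xcast
              (show (r + (j : ℕ)) + (l - (j : ℕ)) - 1 = r + l - 1 by
                have := j.isLt; omega)
              (show (s - (j : ℕ)) - (l - (j : ℕ)) = s - l by
                have := j.isLt; omega)
              (dl (l - (j : ℕ)) (r + (j : ℕ)) (s - (j : ℕ))
                (xcast (show (r + 1) + (j : ℕ) - 1 = r + (j : ℕ) by omega) rfl
                  (dl (j : ℕ) (r + 1) s (xgen (1 : E) hs as (1 : E)))))))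
  /-- Each `d^l_{rs}` is a map of `E`-bimodules. -/
  dl_lmul : ∀ (l r s : ℕ) (e : E), dl l r s ∘ₗ lX e = lX e ∘ₗ dl l r s
  dl_rmul : ∀ (l r s : ℕ) (e : E), dl l r s ∘ₗ rX e = rX e ∘ₗ dl l r s

end ResData

section Xtot

variable {k A H E : Type} [CommRing k] [Ring A] [Algebra k A] [Ring H] [HopfAlgebra k H]
  [Ring E] [Algebra k E]

variable (k A H E) in
/-- The total module `X_n = ⊕_{r+s=n} X_{rs}`. -/
abbrev XT (n : ℕ) : Type :=
  ⨁ (s : Fin (n + 1)), Xc k A H E (n - (s : ℕ)) (s : ℕ)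

/-- The total differential `d_n = ∑_{r+s=n, r+l>0} ∑_{l=0}^{s} d^l_{rs}`. -/
noncomputable def dT {S : CrossedProduct k A H E} (R : ResData k A H E S) (n : ℕ) :
    XT k A H E (n + 1) →ₗ[k] XT k A H E n :=
  DirectSum.toModule k (Fin (n + 2)) (XT k A H E n) (fun s =>
    ∑ l : Fin ((s : ℕ) + 1),
      if h : 0 < (n + 1 - (s : ℕ)) + (l : ℕ) then
        (DirectSum.lof k (Fin (n + 1)) (fun s' : Fin (n + 1) => Xc k A H E (n - (s' : ℕ)) (s' : ℕ))
            ⟨(s : ℕ) - (l : ℕ), by have := s.isLt; have := l.isLt; omega⟩) ∘ₗ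
          xcast
            (show (n + 1 - (s : ℕ)) + (l : ℕ) - 1 = n - ((s : ℕ) - (l : ℕ)) by
              have := s.isLt; have := l.isLt; omega)
            rfl ∘ₗ
          R.dl (l : ℕ) (n + 1 - (s : ℕ)) (s : ℕ)
      else 0)

/-- Left multiplication by `e ∈ E` on `X_n`. -/
noncomputable def lT (e : E) (n : ℕ) : XT k A H E n →ₗ[k] XT k A H E n :=
  DirectSum.toModule k (Fin (n + 1)) (XT k A H E n) (fun s =>
    (DirectSum.lof k (Fin (n + 1)) (fun s' : Fin (n + 1) => Xc k A H E (n - (s' : ℕ)) (s' : ℕ)) s)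
      ∘ₗ lX e)

/-- Right multiplication by `e ∈ E` on `X_n`. -/
noncomputable def rT (e : E) (n : ℕ) : XT k A H E n →ₗ[k] XT k A H E n :=
  DirectSum.toModule k (Fin (n + 1)) (XT k A H E n) (fun s =>
    (DirectSum.lof k (Fin (n + 1)) (fun s' : Fin (n + 1) => Xc k A H E (n - (s' : ℕ)) (s' : ℕ)) s)
      ∘ₗ rX e)

/-- The augmentation `X_0 → E` induced by a map `μ : X_{00} → E`. -/
noncomputable def multT (mult : Xc k A H E 0 0 →ₗ[k] E) : XT k A H E 0 →ₗ[k] E :=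
  DirectSum.toModule k (Fin 1) E (fun s =>
    mult ∘ₗ xcast (show 0 - (s : ℕ) = 0 by have := s.isLt; omega)
      (show (s : ℕ) = 0 by have := s.isLt; omega))

end Xtot

section BarE

variable {k A H E : Type} [CommRing k] [Ring A] [Algebra k A] [Ring H] [HopfAlgebra k H]
  [Ring E] [Algebra k E]

variable (k E) in
/-- The degree-`n` part `B_n(E) = E ⊗ Ē^{⊗n} ⊗ E` of the normalized Hochschild
resolution of `E`. -/
abbrev Bch (n : ℕ) : Type := E ⊗[k] (Tpow k (Qbar k E) n ⊗[k] E)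

/-- The generator `e ⊗ x̄₁ ⊗ ⋯ ⊗ x̄ₙ ⊗ e'` of `B_n(E)`. -/
def bgen (e : E) {n : ℕ} (xs : Fin n → E) (e' : E) : Bch k E n :=
  e ⊗ₜ[k] (tp k (fun i => qbar k E (xs i)) ⊗ₜ[k] e')

/-- Left multiplication by `e ∈ E` on `B_n(E)`. -/
noncomputable def lB (e : E) {n : ℕ} : Bch k E n →ₗ[k] Bch k E n :=
  TensorProduct.map (LinearMap.mulLeft k e) LinearMap.id

/-- Right multiplication by `e ∈ E` on `B_n(E)`. -/
noncomputable def rB (e : E) {n : ℕ} : Bch k E n →ₗ[k] Bch k E n :=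
  TensorProduct.map LinearMap.id (TensorProduct.map LinearMap.id (LinearMap.mulRight k e))

variable (k E) in
/-- `IsBp bp` : `bp` is the differential `b'` of the normalized Hochschild resolution. -/
def IsBp (bp : ∀ n : ℕ, Bch k E (n + 1) →ₗ[k] Bch k E n) : Prop :=
  ∀ (n : ℕ) (e : E) (xs : Fin (n + 1) → E) (e' : E),
    bp n (bgen e xs e') =
      bgen (e * xs 0) (fun i : Fin n => xs i.succ) e'
      + (∑ i : Fin n, ((-1 : ℤ) ^ ((i : ℕ) + 1)) • bgen e (mulAt xs i) e')
      + ((-1 : ℤ) ^ (n + 1)) • bgen e (fun i : Fin n => xs i.castSucc) (xs (Fin.last n) * e')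

variable (k E) in
/-- `IsXi xi` : `xi` is the left `E`-linear contracting homotopy
`ξ_{n+1}(𝐱) = (-1)^{n+1} 𝐱 ⊗ 1` of the normalized Hochschild resolution. -/
def IsXi (xi : ∀ n : ℕ, Bch k E n →ₗ[k] Bch k E (n + 1)) : Prop :=
  ∀ (n : ℕ) (e : E) (xs : Fin n → E) (e' : E),
    xi n (bgen e xs e') = ((-1 : ℤ) ^ (n + 1)) • bgen e (Fin.snoc xs e') (1 : E)

end BarE

section Statement2

variable {k A H E : Type} [CommRing k] [Ring A] [Algebra k A] [Ring H] [HopfAlgebra k H]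
  [Ring E] [Algebra k E]

/-- Left multiplication by `e ∈ E` on `Y_s`. -/
noncomputable def lY (e : E) {s : ℕ} : Yc k H E s →ₗ[k] Yc k H E s :=
  TensorProduct.map (LinearMap.mulLeft k e) LinearMap.id

/-- The map `μ'_n : X_n → Y_n` which is `μ_n` on `X_{0n}` and `0` on `X_{r,n-r}`, `r > 0`. -/
noncomputable def muT {S : CrossedProduct k A H E} (R : ResData k A H E S) (n : ℕ) :
    XT k A H E n →ₗ[k] Yc k H E n :=
  DirectSum.toModule k (Fin (n + 1)) (Yc k H E n) (fun s =>
    if h : (s : ℕ) = n then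
      R.mu n ∘ₗ xcast (show n - (s : ℕ) = 0 by omega) h
    else 0)

/-- `σ̄₀ = σ⁰₀₀ ∘ σ⁻¹₀`. -/
noncomputable def sbar0 {S : CrossedProduct k A H E} (R : ResData k A H E S)
    (σm : E →ₗ[k] Yc k H E 0) : E →ₗ[k] XT k A H E 0 :=
  (DirectSum.lof k (Fin 1) (fun s' : Fin 1 => Xc k A H E (0 - (s' : ℕ)) (s' : ℕ)) 0) ∘ₗ
    R.sig0 0 ∘ₗ σm

/-- `σ̄_{n+1} = -∑_{l=0}^{n+1} σ^l_{l,n-l+1} ∘ σ⁻¹_{n+1} ∘ μ_n + ∑_{r+s=n} ∑_{l=0}^s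
σ^l_{r+l+1,s-l}`. -/
noncomputable def sbar {S : CrossedProduct k A H E} (R : ResData k A H E S)
    (slY : ∀ l s : ℕ, Yc k H E s →ₗ[k] Xc k A H E l (s - l))
    (slX : ∀ l r s : ℕ, Xc k A H E r s →ₗ[k] Xc k A H E (r + l + 1) (s - l))
    (sY : ∀ s : ℕ, Yc k H E s →ₗ[k] Yc k H E (s + 1)) (n : ℕ) :
    XT k A H E n →ₗ[k] XT k A H E (n + 1) :=
  - ((∑ l : Fin (n + 2),
      (DirectSum.lof k (Fin (n + 2)) (fun s' : Fin (n + 2) => Xc k A H E (n + 1 - (s' : ℕ)) (s' : ℕ))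
          ⟨n + 1 - (l : ℕ), by omega⟩) ∘ₗ
        xcast (show (l : ℕ) = n + 1 - (n + 1 - (l : ℕ)) by have := l.isLt; omega) rfl ∘ₗ
        slY (l : ℕ) (n + 1)) ∘ₗ sY n ∘ₗ muT R n)
  + DirectSum.toModule k (Fin (n + 1)) (XT k A H E (n + 1)) (fun s =>
      ∑ l : Fin ((s : ℕ) + 1),
        (DirectSum.lof k (Fin (n + 2)) (fun s' : Fin (n + 2) => Xc k A H E (n + 1 - (s' : ℕ)) (s' : ℕ))
            ⟨(s : ℕ) - (l : ℕ), by have := s.isLt; have := l.isLt; omega⟩) ∘ₗ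
          xcast
            (show (n - (s : ℕ)) + (l : ℕ) + 1 = n + 1 - ((s : ℕ) - (l : ℕ)) by
              have := s.isLt; have := l.isLt; omega)
            rfl ∘ₗ
          slX (l : ℕ) (n - (s : ℕ)) (s : ℕ))


end Statement2

section Filt

variable {k A H E : Type} [CommRing k] [Ring A] [Algebra k A] [Ring H] [HopfAlgebra k H]
  [Ring E] [Algebra k E]

variable (k A H E) in
/-- The filtration `F^i(X_n) = ⊕_{0 ≤ s ≤ i} E ⊗ H̄^s ⊗ Ā^{n-s} ⊗ E` of `X_n`. -/
noncomputable def FX (i n : ℕ) : Submodule k (XT k A H E n) :=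
  ⨆ (s : Fin (n + 1)) (_ : (s : ℕ) ≤ i),
    LinearMap.range (DirectSum.lof k (Fin (n + 1))
      (fun s' : Fin (n + 1) => Xc k A H E (n - (s' : ℕ)) (s' : ℕ)) s)

/-- The filtration `F^i(B_n(E))`: the sub-bimodule of `B_n(E)` generated by the tensors
`1 ⊗ x₁ ⊗ ⋯ ⊗ xₙ ⊗ 1` such that at least `n - i` of the `xⱼ` belong to `A`. -/
noncomputable def FB (S : CrossedProduct k A H E) (i n : ℕ) : Submodule k (Bch k E n) :=
  Submodule.span k
    {z : Bch k E n | ∃ (e e' : E) (xs : Fin n → E) (J : Finset (Fin n)),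
      n - i ≤ J.card ∧ (∀ j ∈ J, ∃ a : A, qbar k E (xs j) = qbar k E (S.aE a)) ∧
      z = bgen e xs e'}


end Filt

section Statement5

variable {k A H E : Type} [CommRing k] [Ring A] [Algebra k A] [Ring H] [HopfAlgebra k H]
  [Ring E] [Algebra k E]

/-!
The last tensor factor has to be tracked alongside the filtration degree. For `P ⊆ E`, enlarge
`F^{i-1}` by those generators of exact degree `i` whose last factor lies in `P`. The differentials
`d` and `b'` send a generator of degree `i` with last factor `1` into this refined piece for
`P = A`. Conversely `ξ` and `σ̄` send the refined piece for `P = A` into the one for `P = {1}`: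
absorbing a last factor from `A` does not raise the degree, and the summands of `σ̄` through
`σ⁻¹ ∘ μ` vanish on generators with last factor in `A`. Hence, by induction on `n`, the maps
`φ`, `ψ` and `ω` send a generator of degree `i` with last factor `1` into the refined piece for
`P = {1}`, and right `E`-linearity extends this to all refined pieces, up to `F^i` for `P = E`.
-/

section RefinedSpan

variable {R M M' Γ Γ' C : Type*} [Semiring R] [AddCommMonoid M] [Module R M]
  [AddCommMonoid M'] [Module R M']

variable (R) in
/-- The span of the generators `g γ c` of weight `w γ ≤ i`, where those of weight exactly `i`
must have `c ∈ P`. It lies between the steps `i - 1` and `i` of the filtration by weight, and is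
the whole step `i` for `P = Set.univ`. -/
def refinedSpan (w : Γ → ℕ) (g : Γ → C → M) (P : Set C) (i : ℕ) : Submodule R M :=
  Submodule.span R {x | ∃ γ c, w γ ≤ i ∧ (w γ = i → c ∈ P) ∧ g γ c = x}

variable {w : Γ → ℕ} {g : Γ → C → M} {w' : Γ' → ℕ} {g' : Γ' → C → M'} {P : Set C} {i : ℕ}

lemma mem_refinedSpan {γ : Γ} {c : C} (hγ : w γ ≤ i) (hc : w γ = i → c ∈ P) :
    g γ c ∈ refinedSpan R w g P i :=
  Submodule.subset_span ⟨γ, c, hγ, hc, rfl⟩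

lemma refinedSpan_le {W : Submodule R M} :
    refinedSpan R w g P i ≤ W ↔ ∀ γ c, w γ ≤ i → (w γ = i → c ∈ P) → g γ c ∈ W := by
  refine Submodule.span_le.trans ⟨fun h γ c hγ hc => h ⟨γ, c, hγ, hc, rfl⟩, ?_⟩
  rintro h _ ⟨γ, c, hγ, hc, rfl⟩
  exact h γ c hγ hc

lemma refinedSpan_le_comap_of_rightLinear [Monoid C] {ρ : C → M →ₗ[R] M} {ρ' : C → M' →ₗ[R] M'}
    (hρ : ∀ c γ d, ρ c (g γ d) = g γ (d * c)) (hρ' : ∀ c γ d, ρ' c (g' γ d) = g' γ (d * c))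
    {f : M →ₗ[R] M'} (hf : ∀ c, f ∘ₗ ρ c = ρ' c ∘ₗ f)
    (h : ∀ γ, f (g γ 1) ∈ refinedSpan R w' g' {1} (w γ)) (P : Set C) (i : ℕ) :
    refinedSpan R w g P i ≤ (refinedSpan R w' g' P i).comap f := by
  refine refinedSpan_le.2 fun γ c hγ hc => ?_
  have hfc : f (g γ c) = ρ' c (f (g γ 1)) := by
    simpa [hρ] using LinearMap.congr_fun (hf c) (g γ 1)
  have hρc : refinedSpan R w' g' {1} (w γ) ≤ (refinedSpan R w' g' P i).comap (ρ' c) := by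
    refine refinedSpan_le.2 fun γ' d hγ' hd => ?_
    rw [Submodule.mem_comap, hρ']
    refine mem_refinedSpan (hγ'.trans hγ) fun hi => ?_
    obtain rfl : d = 1 := hd (hγ'.antisymm (hi ▸ hγ))
    simpa using hc (hγ.antisymm (hi ▸ hγ'))
  rw [Submodule.mem_comap, hfc]
  exact hρc (h γ)

end RefinedSpan

section CountOff

variable {α ι κ : Type*} [Fintype ι] [Fintype κ] {n : ℕ}

open Classical in
/-- The number of entries of the family `xs` lying outside `T`. -/
def countOff (T : Set α) (xs : ι → α) : ℕ :=
  (Finset.univ.filter fun j => xs j ∉ T).card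

lemma countOff_le_of_forall_exists {T : Set α} {xs : ι → α} {ys : κ → α} (p : ι → κ)
    (h : ∀ j, ys j ∉ T → ∃ i, p i = j ∧ xs i ∉ T) : countOff T ys ≤ countOff T xs := by
  classical
  refine (Finset.card_le_card (t := (Finset.univ.filter fun i => xs i ∉ T).image p) ?_).trans
    Finset.card_image_le
  intro j hj
  obtain ⟨i, rfl, hi⟩ := h j (Finset.mem_filter.1 hj).2
  exact Finset.mem_image_of_mem p (by simpa using hi)

lemma countOff_tail_le (T : Set α) (xs : Fin (n + 1) → α) :
    countOff T (fun j : Fin n => xs j.succ) ≤ countOff T xs := by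
  simp [countOff, Finset.card_filter, Fin.sum_univ_succ]

lemma countOff_le_iff_castSucc {T : Set α} {xs : Fin (n + 1) → α} {i : ℕ} :
    countOff T xs ≤ i ↔ countOff T (fun j : Fin n => xs j.castSucc) ≤ i ∧
      (countOff T (fun j : Fin n => xs j.castSucc) = i → xs (Fin.last n) ∈ T) := by
  have hsum : countOff T xs = countOff T (fun j : Fin n => xs j.castSucc) +
      (open Classical in if xs (Fin.last n) ∉ T then 1 else 0) := by
    simp only [countOff, Finset.card_filter, Fin.sum_univ_castSucc]
  by_cases h : xs (Fin.last n) ∈ T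
  · simp [hsum, h]
  · simp only [hsum, h, not_false_eq_true, if_true, imp_false]
    omega

lemma countOff_mulAt_le {B : Type} {σ : Type*} [Mul B] [SetLike σ B] [MulMemClass σ B] (T : σ)
    (xs : Fin (n + 1) → B) (i : Fin n) : countOff (T : Set B) (mulAt xs i) ≤ countOff T xs := by
  refine countOff_le_of_forall_exists i.predAbove fun j hj => ?_
  rcases lt_trichotomy j i with hji | rfl | hij
  · refine ⟨j.castSucc, Fin.predAbove_castSucc_of_le _ _ hji.le, ?_⟩
    simpa [mulAt, Fin.lt_def.1 hji] using hj
  · by_cases hleft : xs j.castSucc ∈ T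
    · refine ⟨j.succ, Fin.predAbove_succ_self _, fun hright => hj ?_⟩
      simpa [mulAt] using mul_mem hleft hright
    · exact ⟨j.castSucc, Fin.predAbove_castSucc_self _, hleft⟩
  · refine ⟨j.succ, Fin.predAbove_succ_of_le _ _ hij.le, ?_⟩
    simpa [mulAt, (Fin.lt_def.1 hij).not_gt, (Fin.lt_def.1 hij).ne'] using hj

lemma countOff_le_iff_exists_finset {T : Set α} {xs : Fin n → α} {i : ℕ} :
    countOff T xs ≤ i ↔ ∃ J : Finset (Fin n), n - i ≤ J.card ∧ ∀ j ∈ J, xs j ∈ T := by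
  classical
  constructor
  · intro h
    refine ⟨(Finset.univ.filter fun j => xs j ∉ T)ᶜ, ?_, fun j hj => by simpa using hj⟩
    rw [Finset.card_compl, Fintype.card_fin]
    exact Nat.sub_le_sub_left h n
  · rintro ⟨J, hcard, hJ⟩
    have hle : countOff T xs ≤ Jᶜ.card :=
      Finset.card_le_card fun j hj =>
        Finset.mem_compl.2 fun h => (Finset.mem_filter.1 hj).2 (hJ j h)
    rw [Finset.card_compl, Fintype.card_fin] at hle
    omega

end CountOff

lemma span_image2_tmul_eq_top {R M N : Type*} [CommSemiring R] [AddCommMonoid M] [Module R M]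
    [AddCommMonoid N] [Module R N] {s : Set M} {t : Set N} (hs : Submodule.span R s = ⊤)
    (ht : Submodule.span R t = ⊤) : Submodule.span R (Set.image2 (· ⊗ₜ[R] ·) s t) = ⊤ := by
  rw [← map₂_mk_top_top_eq_top, ← hs, ← ht, Submodule.map₂_span_span]
  rfl

section TensorPowers

variable {V W : Type} [AddCommGroup V] [Module k V] [AddCommGroup W] [Module k W] {n : ℕ}

lemma tp_eq_zero {v : Fin n → V} (j : Fin n) (hj : v j = 0) : tp k v = 0 := by
  induction n with
  | zero => exact j.elim0
  | succ n ih =>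
    change v 0 ⊗ₜ[k] tp k (fun i => v i.succ) = 0
    cases j using Fin.cases with
    | zero => rw [hj, zero_tmul]
    | succ j => rw [ih j hj, tmul_zero]

lemma smul_tp (c : k) (v : Fin (n + 1) → V) :
    c • tp k v = tp k (Fin.cons (c • v 0) fun i => v i.succ : Fin (n + 1) → V) :=
  smul_tmul' c (v 0) (tp k fun i => v i.succ)

lemma span_range_tp_eq_top {q : W →ₗ[k] V} (hq : Function.Surjective q) :
    Submodule.span k (Set.range fun xs : Fin n → W => tp k fun i => q (xs i)) = ⊤ := by
  induction n with
  | zero =>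
    refine eq_top_iff.2 fun c _ => ?_
    have hc : (show k from c) • tp k (fun i : Fin 0 => q (i.elim0)) = c := mul_one (show k from c)
    exact hc ▸ Submodule.smul_mem _ _ (Submodule.subset_span ⟨fun i => i.elim0, rfl⟩)
  | succ n ih =>
    refine eq_top_iff.2 ((span_image2_tmul_eq_top Submodule.span_univ ih).ge.trans
      (Submodule.span_mono ?_))
    rintro _ ⟨v, -, _, ⟨xs, rfl⟩, rfl⟩
    obtain ⟨x, rfl⟩ := hq v
    exact ⟨Fin.cons x xs, rfl⟩

lemma exists_eq_sum_tp (x : Tpow k V (n + 1)) :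
    ∃ (N : ℕ) (u : Fin N → Fin (n + 1) → V), x = ∑ i, tp k (u i) := by
  have hx : x ∈ Submodule.span k (Set.range fun v : Fin (n + 1) → V => tp k v) :=
    (span_range_tp_eq_top (q := LinearMap.id (R := k)) Function.surjective_id).ge trivial
  induction hx using Submodule.closure_induction with
  | zero => exact ⟨0, Fin.elim0, by simp⟩
  | add x y _ _ hx hy =>
    obtain ⟨N, u, rfl⟩ := hx
    obtain ⟨M, v, rfl⟩ := hy
    exact ⟨N + M, Fin.append u v, by simp [Fin.sum_univ_add]⟩
  | smul_mem c x hx =>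
    obtain ⟨v, rfl⟩ := hx
    exact ⟨1, fun _ => Fin.cons (c • v 0) fun i => v i.succ, by simp [smul_tp]⟩

end TensorPowers

lemma qbar_one {B : Type} [Ring B] [Algebra k B] : qbar k B 1 = 0 :=
  (Submodule.Quotient.mk_eq_zero _).2 ⟨1, by simp⟩

lemma exists_sRep {C : Type} [AddCommGroup C] [Module k C] [Coalgebra k C] (n : ℕ) (c : C) :
    ∃ (N : ℕ) (u : Fin N → Fin (n + 1) → C), SRep k n c N u :=
  exists_eq_sum_tp (itComul k n c)

section Bialgebra

variable {B : Type} [Ring B] [Bialgebra k B]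

lemma itComul_one (n : ℕ) : itComul k n (1 : B) = tp k fun _ : Fin (n + 1) => (1 : B) := by
  induction n with
  | zero => rfl
  | succ n ih =>
    change TensorProduct.map LinearMap.id (itComul k n) (Coalgebra.comul (R := k) (1 : B)) =
      (1 : B) ⊗ₜ[k] tp k fun _ => (1 : B)
    rw [Bialgebra.comul_one, Algebra.TensorProduct.one_def, map_tmul, ih, LinearMap.id_apply]

lemma sRep_one (n : ℕ) : SRep k n (1 : B) 1 fun _ _ => 1 := by
  simp [SRep, itComul_one]

end Bialgebra

namespace CrossedProduct

variable (S : CrossedProduct k A H E)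

lemma aE_one : S.aE 1 = 1 := S.ι_one

lemma hE_one : S.hE 1 = 1 := S.ι_one

lemma aE_mul (a b : A) : S.aE (a * b) = S.aE a * S.aE b := by
  have hmul := S.ι_mul a b 1 1 1 1 _ _ (sRep_one 2) (sRep_one 1)
  simp only [Finset.univ_unique, Finset.sum_singleton, S.one_act, (S.f_normal 1).1,
    Bialgebra.counit_one, one_smul, mul_one] at hmul
  exact hmul.symm

/-- The copy `A # 1` of `A` inside the crossed product. -/
def subalgebraA : Subalgebra k E :=
  (LinearMap.range S.aE).toSubalgebra ⟨1, S.aE_one⟩ <| by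
    rintro _ _ ⟨a, rfl⟩ ⟨b, rfl⟩
    exact ⟨a * b, S.aE_mul a b⟩

lemma mem_subalgebraA {x : E} : x ∈ S.subalgebraA ↔ ∃ a, S.aE a = x := Iff.rfl

lemma mem_subalgebraA_iff_exists_qbar_eq {x : E} :
    x ∈ S.subalgebraA ↔ ∃ a, qbar k E x = qbar k E (S.aE a) := by
  constructor
  · rintro ⟨a, rfl⟩
    exact ⟨a, rfl⟩
  · rintro ⟨a, ha⟩
    obtain ⟨c, hc⟩ := (Submodule.Quotient.eq _).1 ha
    rw [← sub_add_cancel x (S.aE a), ← hc]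
    exact add_mem (S.subalgebraA.algebraMap_mem c) ⟨a, rfl⟩

end CrossedProduct

section Generators

variable {r r' s s' n i : ℕ} {P : Set E}

lemma xgen_mem_of_forall_ι (S : CrossedProduct k A H E) {W : Submodule k (Xc k A H E r s)}
    {hs : Fin s → H} {as : Fin r → A} {e' : E}
    (h : ∀ a₀ h₀, xgen (S.ι (a₀ ⊗ₜ[k] h₀)) hs as e' ∈ W) (e : E) : xgen e hs as e' ∈ W := by
  let insertLeft : A ⊗[k] H →ₗ[k] Xc k A H E r s := (TensorProduct.mk k _ _).flip
    (tp k (fun j => qbar k H (hs j)) ⊗ₜ[k] (tp k (fun j => qbar k A (as j)) ⊗ₜ[k] e')) ∘ₗ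
      S.ι.toLinearMap
  have hle : (⊤ : Submodule k (A ⊗[k] H)) ≤ W.comap insertLeft := by
    rw [← span_tmul_eq_top, Submodule.span_le]
    rintro _ ⟨a₀, h₀, rfl⟩
    exact h a₀ h₀
  have hmem : insertLeft (S.ι.symm e) ∈ W := hle trivial
  simpa [insertLeft, xgen] using hmem

/-- The span of the generators of `X_{rs}` whose rightmost factor lies in `P`. -/
def lastIn (P : Set E) (r s : ℕ) : Submodule k (Xc k A H E r s) :=
  Submodule.span k {x | ∃ e hs as, ∃ e' ∈ P, xgen e hs as e' = x}

lemma xgen_mem_lastIn {e e' : E} {hs : Fin s → H} {as : Fin r → A} (he' : e' ∈ P) :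
    xgen e hs as e' ∈ lastIn (k := k) P r s :=
  Submodule.subset_span ⟨e, hs, as, e', he', rfl⟩

lemma lastIn_le {W : Submodule k (Xc k A H E r s)} :
    lastIn P r s ≤ W ↔ ∀ e hs as, ∀ e' ∈ P, xgen e hs as e' ∈ W := by
  refine Submodule.span_le.trans ⟨fun h e hs as e' he' => h ⟨e, hs, as, e', he', rfl⟩, ?_⟩
  rintro h _ ⟨e, hs, as, e', he', rfl⟩
  exact h e hs as e' he'

lemma lastIn_univ : lastIn Set.univ r s = (⊤ : Submodule k (Xc k A H E r s)) := by
  refine eq_top_iff.2 (((span_image2_tmul_eq_top Submodule.span_univ <|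
    span_image2_tmul_eq_top (span_range_tp_eq_top (unitSub k H).mkQ_surjective) <|
      span_image2_tmul_eq_top (span_range_tp_eq_top (unitSub k A).mkQ_surjective)
        Submodule.span_univ).ge).trans (Submodule.span_mono ?_))
  rintro _ ⟨e, -, _, ⟨_, ⟨hs, rfl⟩, _, ⟨_, ⟨as, rfl⟩, e', -, rfl⟩, rfl⟩, rfl⟩
  exact ⟨e, hs, as, e', trivial, rfl⟩

lemma xcast_mem_lastIn {hr : r = r'} {hs : s = s'} {x : Xc k A H E r s} (hx : x ∈ lastIn P r s) :
    xcast hr hs x ∈ lastIn P r' s' := by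
  subst hr hs
  exact hx

lemma span_ygen_eq_top :
    Submodule.span k {y : Yc k H E s | ∃ e hs h, ygen e hs h = y} = ⊤ := by
  refine eq_top_iff.2 (((span_image2_tmul_eq_top Submodule.span_univ <|
    span_image2_tmul_eq_top (span_range_tp_eq_top (unitSub k H).mkQ_surjective)
      Submodule.span_univ).ge).trans (Submodule.span_mono ?_))
  rintro _ ⟨e, -, _, ⟨_, ⟨hs, rfl⟩, h, -, rfl⟩, rfl⟩
  exact ⟨e, hs, h, rfl⟩

lemma ygen_snoc_one (e : E) (hs : Fin s → H) (h : H) :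
    ygen (k := k) e (Fin.snoc hs 1 : Fin (s + 1) → H) h = 0 := by
  rw [ygen, tp_eq_zero (Fin.last s) (by simp only [Fin.snoc_last, qbar_one]), zero_tmul, tmul_zero]

/-- The inclusion of the summand `X_{n-s,s}` into `X_n`. -/
abbrev lofX (n : ℕ) (s : Fin (n + 1)) : Xc k A H E (n - (s : ℕ)) (s : ℕ) →ₗ[k] XT k A H E n :=
  lof k (Fin (n + 1)) (fun s' : Fin (n + 1) => Xc k A H E (n - (s' : ℕ)) (s' : ℕ)) s

variable (A H E) in
/-- The data of a generator of `X_n` apart from its rightmost factor: the degree `s` in `H`, the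
leftmost factor, the `s` factors in `H` and the `n - s` factors in `A`. -/
abbrev XIndex (n : ℕ) : Type :=
  Σ s : Fin (n + 1), E × (Fin (s : ℕ) → H) × (Fin (n - (s : ℕ)) → A)

/-- The generator of `X_n` with the given index and rightmost factor `e'`. -/
def xTotGen (γ : XIndex A H E n) (e' : E) : XT k A H E n :=
  lofX n γ.1 (xgen γ.2.1 γ.2.2.1 γ.2.2.2 e')

/-- `F^{i-1}(X_n)` enlarged by the generators of `X_{n-i,i}` with rightmost factor in `P`. -/
def refinedFX (P : Set E) (i n : ℕ) : Submodule k (XT k A H E n) :=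
  refinedSpan k (fun γ : XIndex A H E n => (γ.1 : ℕ)) xTotGen P i

lemma lofX_mem_refinedFX {s : Fin (n + 1)} {x : Xc k A H E (n - (s : ℕ)) (s : ℕ)}
    (hsi : (s : ℕ) ≤ i) (hx : (s : ℕ) = i → x ∈ lastIn P _ _) :
    lofX n s x ∈ refinedFX P i n := by
  have hlof {Q : Set E} (hQ : (s : ℕ) = i → Q ⊆ P) :
      lastIn Q _ _ ≤ (refinedFX (k := k) P i n).comap (lofX n s) :=
    lastIn_le.2 fun e hs as e' he' =>
      mem_refinedSpan (γ := (⟨s, e, hs, as⟩ : XIndex A H E n)) hsi fun h => hQ h he'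
  by_cases h : (s : ℕ) = i
  · exact hlof (fun _ => subset_rfl) (hx h)
  · exact hlof (fun h' => absurd h' h) (lastIn_univ.ge trivial)

lemma FX_eq_refinedFX_univ : FX k A H E i n = refinedFX Set.univ i n := by
  refine le_antisymm (iSup₂_le fun s hsi => ?_) (refinedSpan_le.2 fun γ e' hγ _ => ?_)
  · rintro _ ⟨x, rfl⟩
    exact lofX_mem_refinedFX hsi fun _ => lastIn_univ.ge trivial
  · exact Submodule.mem_iSup_of_mem γ.1 (Submodule.mem_iSup_of_mem hγ ⟨_, rfl⟩)

lemma rT_xTotGen (c : E) (γ : XIndex A H E n) (e' : E) :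
    rT (k := k) c n (xTotGen γ e') = xTotGen γ (e' * c) := by
  rw [rT, xTotGen, toModule_lof]
  rfl

end Generators

section Resolution

variable {S : CrossedProduct k A H E} (R : ResData k A H E S) {r s n i : ℕ}

lemma dl_zero_xgen_one_mem_lastIn (hr : 0 < r) (e : E) (hs : Fin s → H) (as : Fin r → A) :
    R.dl 0 r s (xgen e hs as 1) ∈ lastIn (S.subalgebraA : Set E) (r - 1) s := by
  obtain ⟨r, rfl⟩ := Nat.exists_eq_succ_of_ne_zero hr.ne'
  refine xgen_mem_of_forall_ι S (W := (lastIn _ r s).comap (R.dl 0 (r + 1) s)) (fun a₀ h₀ => ?_) e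
  choose N v hv using fun j => exists_sRep (k := k) 1 ((Fin.cons h₀ hs : Fin (s + 1) → H) j)
  have hone : S.ι ((1 : A) ⊗ₜ[k] (1 : H)) ∈ S.subalgebraA := ⟨1, rfl⟩
  have hlast : S.ι ((as (Fin.last r) * 1) ⊗ₜ[k] (1 : H)) ∈ S.subalgebraA := ⟨_, rfl⟩
  rw [Submodule.mem_comap, ← S.ι_one, R.d0_eq r s a₀ h₀ hs as 1 1 N v hv]
  exact add_mem (add_mem (sum_mem fun _ _ => xgen_mem_lastIn hone)
    (sum_mem fun _ _ => zsmul_mem (xgen_mem_lastIn hone) _)) (zsmul_mem (xgen_mem_lastIn hlast) _)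

lemma dT_xTotGen_one_mem (γ : XIndex A H E (n + 1)) :
    dT R n (xTotGen γ 1) ∈ refinedFX (S.subalgebraA : Set E) γ.1 n := by
  rw [dT, xTotGen, toModule_lof, LinearMap.sum_apply]
  refine sum_mem ?_
  rintro ⟨l, hls⟩ -
  split_ifs with hpos
  · refine lofX_mem_refinedFX (Nat.sub_le _ _) fun hl => xcast_mem_lastIn ?_
    obtain rfl : l = 0 := by
      change (γ.1 : ℕ) - l = γ.1 at hl
      omega
    exact dl_zero_xgen_one_mem_lastIn R hpos _ _ _
  · exact zero_mem _

/-- `sY` is the contracting homotopy `σ⁻¹(e ⊗ 𝐡 ⊗ h) = (-1)^s e ⊗ 𝐡 ⊗ h̄ ⊗ 1` of `Y_*`. -/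
def IsSigmaInv (sY : ∀ s : ℕ, Yc k H E s →ₗ[k] Yc k H E (s + 1)) : Prop :=
  ∀ (s : ℕ) (e : E) (hs : Fin s → H) (h : H),
    sY s (ygen e hs h) = ((-1 : ℤ) ^ s) • ygen e (Fin.snoc hs h) 1

variable {sY : ∀ s : ℕ, Yc k H E s →ₗ[k] Yc k H E (s + 1)}

-- `μ` leaves the factor `1 ∈ H` of `a # 1` in last place, and `σ⁻¹` moves it into `H̄`.
lemma sY_mu_eq_zero (hsY : IsSigmaInv sY) {x : Xc k A H E 0 s}
    (hx : x ∈ lastIn (S.subalgebraA : Set E) 0 s) : sY s (R.mu s x) = 0 := by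
  suffices hle : lastIn (S.subalgebraA : Set E) 0 s ≤ LinearMap.ker (sY s ∘ₗ R.mu s) from hle hx
  refine lastIn_le.2 fun e hs as e' he' => ?_
  obtain ⟨b, rfl⟩ := S.mem_subalgebraA.1 he'
  obtain rfl : as = fun j : Fin 0 => j.elim0 := Subsingleton.elim _ _
  refine xgen_mem_of_forall_ι S (fun a₀ h₀ => ?_) e
  choose N v hv using fun j => exists_sRep (k := k) 1 ((Fin.cons h₀ hs : Fin (s + 1) → H) j)
  have hmu : R.mu s (xgen (S.ι (a₀ ⊗ₜ[k] h₀)) hs _ (S.aE b)) = _ :=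
    R.mu_eq s a₀ h₀ hs b 1 N v hv
  rw [LinearMap.mem_ker, LinearMap.comp_apply, hmu, map_sum]
  refine Finset.sum_eq_zero fun c _ => ?_
  rw [hsY, ygen_snoc_one, smul_zero]

lemma sig0_sY_mem_lastIn (hsY : IsSigmaInv sY) (y : Yc k H E s) :
    R.sig0 (s + 1) (sY s y) ∈ lastIn ({1} : Set E) 0 (s + 1) := by
  suffices hle : ⊤ ≤ (lastIn ({1} : Set E) 0 (s + 1)).comap (R.sig0 (s + 1) ∘ₗ sY s) from
    hle (x := y) trivial
  rw [← span_ygen_eq_top, Submodule.span_le]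
  rintro _ ⟨e, hs, h, rfl⟩
  rw [SetLike.mem_coe, Submodule.mem_comap, LinearMap.comp_apply, hsY s e hs h, map_zsmul,
    R.sig0_eq, S.hE_one]
  exact zsmul_mem (xgen_mem_lastIn (Set.mem_singleton _)) _

lemma sig_mem_lastIn {x : Xc k A H E r s} (hx : x ∈ lastIn (S.subalgebraA : Set E) r s) :
    R.sig r s x ∈ lastIn ({1} : Set E) (r + 1) s := by
  suffices hle : lastIn (S.subalgebraA : Set E) r s ≤
      (lastIn ({1} : Set E) (r + 1) s).comap (R.sig r s) from hle hx
  refine lastIn_le.2 fun e hs as e' he' => ?_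
  obtain ⟨b, rfl⟩ := S.mem_subalgebraA.1 he'
  have hsig : R.sig r s (xgen e hs as (S.aE b)) = _ := R.sig_eq r s e hs as b 1
  rw [Submodule.mem_comap, hsig, S.hE_one]
  exact zsmul_mem (xgen_mem_lastIn (Set.mem_singleton _)) _

lemma sY_muT_xTotGen_eq_zero (hsY : IsSigmaInv sY) {γ : XIndex A H E n} {e' : E}
    (he' : (γ.1 : ℕ) = n → e' ∈ S.subalgebraA) : sY n (muT R n (xTotGen γ e')) = 0 := by
  rw [muT, xTotGen, toModule_lof]
  split_ifs with hγ
  · exact sY_mu_eq_zero R hsY (xcast_mem_lastIn (xgen_mem_lastIn (he' hγ)))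
  · exact map_zero _

lemma sum_lofX_slY_mem (hsY : IsSigmaInv sY)
    {slY : ∀ l s : ℕ, Yc k H E s →ₗ[k] Xc k A H E l (s - l)}
    (hslY0 : ∀ s, slY 0 s = R.sig0 s) (hi : n + 1 ≤ i) (y : Yc k H E n) :
    (∑ l : Fin (n + 2), lofX (n + 1) ⟨n + 1 - (l : ℕ), by omega⟩ ∘ₗ
      xcast (show (l : ℕ) = n + 1 - (n + 1 - (l : ℕ)) by omega) rfl ∘ₗ slY (l : ℕ) (n + 1))
        (sY n y) ∈ refinedFX {1} i (n + 1) := by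
  rw [LinearMap.sum_apply]
  refine sum_mem ?_
  rintro ⟨l, hl⟩ -
  refine lofX_mem_refinedFX ((Nat.sub_le _ _).trans hi) fun hli => xcast_mem_lastIn ?_
  obtain rfl : l = 0 := by
    change n + 1 - l = i at hli
    omega
  exact (hslY0 (n + 1)).symm ▸ sig0_sY_mem_lastIn R hsY y

lemma sum_lofX_slX_mem {slX : ∀ l r s : ℕ, Xc k A H E r s →ₗ[k] Xc k A H E (r + l + 1) (s - l)}
    (hslX0 : ∀ r s, slX 0 r s = R.sig r s) {s : Fin (n + 1)} (hsi : (s : ℕ) ≤ i)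
    {x : Xc k A H E (n - (s : ℕ)) (s : ℕ)}
    (hx : (s : ℕ) = i → x ∈ lastIn (S.subalgebraA : Set E) _ _) :
    (∑ l : Fin ((s : ℕ) + 1), lofX (n + 1) ⟨(s : ℕ) - (l : ℕ), by omega⟩ ∘ₗ
      xcast (show (n - (s : ℕ)) + (l : ℕ) + 1 = n + 1 - ((s : ℕ) - (l : ℕ)) by omega) rfl ∘ₗ
        slX (l : ℕ) (n - (s : ℕ)) (s : ℕ)) x ∈ refinedFX {1} i (n + 1) := by
  rw [LinearMap.sum_apply]
  refine sum_mem ?_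
  rintro ⟨l, hl⟩ -
  refine lofX_mem_refinedFX ((Nat.sub_le _ _).trans hsi) fun hli => xcast_mem_lastIn ?_
  change (s : ℕ) - l = i at hli
  obtain rfl : l = 0 := by omega
  exact (hslX0 _ _).symm ▸ sig_mem_lastIn R (hx hli)

lemma refinedFX_le_comap_sbar (hsY : IsSigmaInv sY)
    {slY : ∀ l s : ℕ, Yc k H E s →ₗ[k] Xc k A H E l (s - l)}
    (hslY0 : ∀ s, slY 0 s = R.sig0 s)
    {slX : ∀ l r s : ℕ, Xc k A H E r s →ₗ[k] Xc k A H E (r + l + 1) (s - l)}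
    (hslX0 : ∀ r s, slX 0 r s = R.sig r s) :
    refinedFX (S.subalgebraA : Set E) i n ≤
      (refinedFX {1} i (n + 1)).comap (sbar R slY slX sY n) := by
  refine refinedSpan_le.2 fun γ e' hγ he' => ?_
  rw [Submodule.mem_comap, sbar, LinearMap.add_apply, LinearMap.neg_apply]
  refine add_mem (neg_mem ?_) ?_
  · rcases lt_or_ge n i with hni | hin
    · exact sum_lofX_slY_mem R hsY hslY0 hni _
    · have hzero : sY n (muT R n (xTotGen γ e')) = 0 :=
        sY_muT_xTotGen_eq_zero R hsY fun h => he' (hγ.antisymm (hin.trans h.ge))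
      rw [LinearMap.comp_apply, LinearMap.comp_apply, hzero, map_zero]
      exact zero_mem _
  · rw [xTotGen, toModule_lof]
    exact sum_lofX_slX_mem R hslX0 hγ fun h => xgen_mem_lastIn (he' h)

end Resolution

section Hochschild

variable (S : CrossedProduct k A H E) {n i : ℕ}

/-- `F^{i-1}(B_n(E))` enlarged by the generators `e ⊗ x₁ ⊗ ⋯ ⊗ xₙ ⊗ e'` with exactly `i` of the
`xⱼ` outside `A` and with `e' ∈ P`. -/
def refinedFB (P : Set E) (i n : ℕ) : Submodule k (Bch k E n) :=
  refinedSpan k (fun γ : E × (Fin n → E) => countOff (S.subalgebraA : Set E) γ.2)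
    (fun γ e' => bgen γ.1 γ.2 e') P i

variable {S}

lemma bgen_mem_refinedFB {P : Set E} {e e' : E} {xs : Fin n → E}
    (hxs : countOff (S.subalgebraA : Set E) xs ≤ i)
    (he' : countOff (S.subalgebraA : Set E) xs = i → e' ∈ P) :
    bgen e xs e' ∈ refinedFB S P i n :=
  mem_refinedSpan (γ := (e, xs)) hxs he'

lemma FB_eq_refinedFB_univ : FB S i n = refinedFB S Set.univ i n := by
  refine le_antisymm (Submodule.span_le.2 ?_) (refinedSpan_le.2 fun γ e' hγ _ => ?_)
  · rintro _ ⟨e, e', xs, J, hJ, hxs, rfl⟩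
    refine bgen_mem_refinedFB (countOff_le_iff_exists_finset.2 ⟨J, hJ, fun j hj => ?_⟩)
      fun _ => trivial
    exact S.mem_subalgebraA_iff_exists_qbar_eq.2 (hxs j hj)
  · obtain ⟨J, hJ, hxs⟩ := countOff_le_iff_exists_finset.1 hγ
    exact Submodule.subset_span ⟨γ.1, e', γ.2, J, hJ,
      fun j hj => S.mem_subalgebraA_iff_exists_qbar_eq.1 (hxs j hj), rfl⟩

lemma bp_bgen_one_mem {bp : ∀ n : ℕ, Bch k E (n + 1) →ₗ[k] Bch k E n} (hbp : IsBp k E bp)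
    (e : E) (xs : Fin (n + 1) → E) :
    bp n (bgen e xs 1) ∈
      refinedFB S (S.subalgebraA : Set E) (countOff (S.subalgebraA : Set E) xs) n := by
  have hone : (1 : E) ∈ S.subalgebraA := one_mem _
  have hlast := countOff_le_iff_castSucc.1 (le_refl (countOff (S.subalgebraA : Set E) xs))
  rw [hbp]
  refine add_mem (add_mem (bgen_mem_refinedFB (countOff_tail_le _ _) fun _ => hone)
    (sum_mem fun j _ => zsmul_mem ?_ _)) (zsmul_mem ?_ _)
  · exact bgen_mem_refinedFB (countOff_mulAt_le S.subalgebraA xs j) fun _ => hone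
  · exact bgen_mem_refinedFB hlast.1 fun h => mul_mem (hlast.2 h) hone

lemma refinedFB_le_comap_xi {xi : ∀ n : ℕ, Bch k E n →ₗ[k] Bch k E (n + 1)} (hxi : IsXi k E xi) :
    refinedFB S (S.subalgebraA : Set E) i n ≤ (refinedFB S {1} i (n + 1)).comap (xi n) := by
  refine refinedSpan_le.2 fun γ e' hγ he' => ?_
  rw [Submodule.mem_comap, hxi]
  refine zsmul_mem (bgen_mem_refinedFB (countOff_le_iff_castSucc.2 ?_)
    fun _ => Set.mem_singleton _) _
  simpa only [Fin.snoc_castSucc, Fin.snoc_last] using And.intro hγ he'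

end Hochschild

section Comparison

variable {S : CrossedProduct k A H E} {R : ResData k A H E S}
  {bp : ∀ n : ℕ, Bch k E (n + 1) →ₗ[k] Bch k E n} {xi : ∀ n : ℕ, Bch k E n →ₗ[k] Bch k E (n + 1)}
  {phi : ∀ n : ℕ, XT k A H E n →ₗ[k] Bch k E n} {psi : ∀ n : ℕ, Bch k E n →ₗ[k] XT k A H E n}

theorem refinedFX_le_comap_phi (hxi : IsXi k E xi)
    (hphi0 : ∀ e,
      phi 0 (lofX 0 0 (xgen e (fun i : Fin 0 => i.elim0) (fun i : Fin 0 => i.elim0) 1)) =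
        bgen e (fun i : Fin 0 => i.elim0) 1)
    (hphiS : ∀ (n : ℕ) (γ : XIndex A H E (n + 1)),
      phi (n + 1) (xTotGen γ 1) = xi n (phi n (dT R n (xTotGen γ 1))))
    (hphiR : ∀ (n : ℕ) (e : E), phi n ∘ₗ rT e n = rB e ∘ₗ phi n) (n : ℕ) (P : Set E) (i : ℕ) :
    refinedFX P i n ≤ (refinedFB S P i n).comap (phi n) := by
  induction n generalizing P i with
  | zero =>
    refine refinedSpan_le_comap_of_rightLinear rT_xTotGen (fun _ _ _ => rfl) (hphiR 0) ?_ P i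
    rintro ⟨s, e, hs, as⟩
    obtain rfl : s = 0 := Subsingleton.elim (α := Fin 1) _ _
    obtain rfl : hs = fun i : Fin 0 => i.elim0 := funext fun j : Fin 0 => j.elim0
    obtain rfl : as = fun i : Fin 0 => i.elim0 := funext fun j : Fin 0 => j.elim0
    exact (hphi0 e).symm ▸ bgen_mem_refinedFB le_rfl fun _ => Set.mem_singleton _
  | succ n ih =>
    refine refinedSpan_le_comap_of_rightLinear rT_xTotGen (fun _ _ _ => rfl) (hphiR _)
      (fun γ => ?_) P i
    rw [hphiS]
    exact refinedFB_le_comap_xi hxi (ih _ _ (dT_xTotGen_one_mem R γ))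

theorem refinedFB_le_comap_psi (hbp : IsBp k E bp)
    {sY : ∀ s : ℕ, Yc k H E s →ₗ[k] Yc k H E (s + 1)} (hsY : IsSigmaInv sY)
    {slY : ∀ l s : ℕ, Yc k H E s →ₗ[k] Xc k A H E l (s - l)} (hslY0 : ∀ s, slY 0 s = R.sig0 s)
    {slX : ∀ l r s : ℕ, Xc k A H E r s →ₗ[k] Xc k A H E (r + l + 1) (s - l)}
    (hslX0 : ∀ r s, slX 0 r s = R.sig r s)
    (hpsi0 : ∀ e, psi 0 (bgen e (fun i : Fin 0 => i.elim0) 1) =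
      lofX 0 0 (xgen e (fun i : Fin 0 => i.elim0) (fun i : Fin 0 => i.elim0) 1))
    (hpsiS : ∀ (n : ℕ) (e : E) (xs : Fin (n + 1) → E),
      psi (n + 1) (bgen e xs 1) = sbar R slY slX sY n (psi n (bp n (bgen e xs 1))))
    (hpsiR : ∀ (n : ℕ) (e : E), psi n ∘ₗ rB e = rT e n ∘ₗ psi n) (n : ℕ) (P : Set E) (i : ℕ) :
    refinedFB S P i n ≤ (refinedFX P i n).comap (psi n) := by
  induction n generalizing P i with
  | zero =>
    refine refinedSpan_le_comap_of_rightLinear (fun _ _ _ => rfl) rT_xTotGen (hpsiR 0) ?_ P i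
    rintro ⟨e, xs⟩
    obtain rfl : xs = fun i : Fin 0 => i.elim0 := Subsingleton.elim _ _
    rw [hpsi0]
    exact lofX_mem_refinedFX (Nat.zero_le _) fun _ => xgen_mem_lastIn (Set.mem_singleton _)
  | succ n ih =>
    refine refinedSpan_le_comap_of_rightLinear (fun _ _ _ => rfl) rT_xTotGen (hpsiR _)
      (fun γ => ?_) P i
    rw [hpsiS]
    exact refinedFX_le_comap_sbar R hsY hslY0 hslX0 (ih _ _ (bp_bgen_one_mem hbp γ.1 γ.2))

theorem refinedFB_le_comap_om (hbp : IsBp k E bp) (hxi : IsXi k E xi)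
    (hphi : ∀ n i, refinedFX (S.subalgebraA : Set E) i n ≤
      (refinedFB S (S.subalgebraA : Set E) i n).comap (phi n))
    (hpsi : ∀ n i, refinedFB S (S.subalgebraA : Set E) i n ≤
      (refinedFX (S.subalgebraA : Set E) i n).comap (psi n))
    {om : ∀ n : ℕ, Bch k E n →ₗ[k] Bch k E (n + 1)} (hom0 : om 0 = 0)
    (homS : ∀ (n : ℕ) (e : E) (xs : Fin (n + 1) → E),
      om (n + 1) (bgen e xs 1) = xi (n + 1) (phi (n + 1) (psi (n + 1) (bgen e xs 1))
        - bgen e xs 1 - om n (bp n (bgen e xs 1))))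
    (homR : ∀ (n : ℕ) (e : E), om n ∘ₗ rB e = rB e ∘ₗ om n) (n : ℕ) (P : Set E) (i : ℕ) :
    refinedFB S P i n ≤ (refinedFB S P i (n + 1)).comap (om n) := by
  induction n generalizing P i with
  | zero => simp [hom0]
  | succ n ih =>
    refine refinedSpan_le_comap_of_rightLinear (fun _ _ _ => rfl) (fun _ _ _ => rfl) (homR _)
      (fun γ => ?_) P i
    have hγ : bgen γ.1 γ.2 1 ∈ refinedFB S (S.subalgebraA : Set E) (countOff _ γ.2) (n + 1) :=
      bgen_mem_refinedFB le_rfl fun _ => one_mem S.subalgebraA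
    rw [homS]
    exact refinedFB_le_comap_xi hxi (sub_mem (sub_mem (hphi _ _ (hpsi _ _ hγ)) hγ)
      (ih _ _ (bp_bgen_one_mem hbp γ.1 γ.2)))

end Comparison

/-- **Proposition 1.2.2: the comparison maps preserve the filtrations.**
The maps `φ_*`, `ψ_*` and `ω_{*+1}` of Proposition 1.2.1 preserve the filtrations:
`φ_n(F^i(X_n)) ⊆ F^i(B_n(E))`, `ψ_n(F^i(B_n(E))) ⊆ F^i(X_n)`, and
`ω_{n+1}(F^i(B_n(E))) ⊆ F^i(B_{n+1}(E))` for all `n ≥ 0` and `i ≥ 0`. -/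
theorem comparison_maps_preserve_filtrations
    (S : CrossedProduct k A H E) (R : ResData k A H E S)
    (bp : ∀ n : ℕ, Bch k E (n + 1) →ₗ[k] Bch k E n) (hbp : IsBp k E bp)
    (xi : ∀ n : ℕ, Bch k E n →ₗ[k] Bch k E (n + 1)) (hxi : IsXi k E xi)
    (sY : ∀ s : ℕ, Yc k H E s →ₗ[k] Yc k H E (s + 1))
    (hsY : ∀ (s : ℕ) (e : E) (hs : Fin s → H) (h : H),
      sY s (ygen e hs h) = ((-1 : ℤ) ^ s) • ygen e (Fin.snoc hs h) 1)
    (slY : ∀ l s : ℕ, Yc k H E s →ₗ[k] Xc k A H E l (s - l))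
    (slX : ∀ l r s : ℕ, Xc k A H E r s →ₗ[k] Xc k A H E (r + l + 1) (s - l))
    (hslY0 : ∀ s : ℕ, slY 0 s = R.sig0 s)
    (hslX0 : ∀ r s : ℕ, slX 0 r s = R.sig r s)
    (hslY : ∀ (l s : ℕ) (hl : 1 ≤ l) (hls : l ≤ s),
      slY l s = - ∑ i : Fin l,
        xcast (show (l - 1) + 1 = l by omega) rfl ∘ₗ
          R.sig (l - 1) (s - l) ∘ₗ
          xcast
            (show (i : ℕ) + (l - (i : ℕ)) - 1 = l - 1 by have := i.isLt; omega)
            (show (s - (i : ℕ)) - (l - (i : ℕ)) = s - l by have := i.isLt; omega) ∘ₗ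
          R.dl (l - (i : ℕ)) (i : ℕ) (s - (i : ℕ)) ∘ₗ slY (i : ℕ) s)
    (hslX : ∀ (l r s : ℕ) (hl : 1 ≤ l) (hls : l ≤ s),
      slX l r s = - ∑ i : Fin l,
        R.sig (r + l) (s - l) ∘ₗ
          xcast
            (show (r + (i : ℕ) + 1) + (l - (i : ℕ)) - 1 = r + l by have := i.isLt; omega)
            (show (s - (i : ℕ)) - (l - (i : ℕ)) = s - l by have := i.isLt; omega) ∘ₗ
          R.dl (l - (i : ℕ)) (r + (i : ℕ) + 1) (s - (i : ℕ)) ∘ₗ slX (i : ℕ) r s)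
    (phi : ∀ n : ℕ, XT k A H E n →ₗ[k] Bch k E n)
    (psi : ∀ n : ℕ, Bch k E n →ₗ[k] XT k A H E n)
    (hphi0 : ∀ e e' : E,
      phi 0 (DirectSum.lof k (Fin 1) (fun s' : Fin 1 => Xc k A H E (0 - (s' : ℕ)) (s' : ℕ)) 0
        (xgen e (fun i : Fin 0 => i.elim0) (fun i : Fin 0 => i.elim0) e')) =
      bgen e (fun i : Fin 0 => i.elim0) e')
    (hpsi0 : ∀ e e' : E,
      psi 0 (bgen e (fun i : Fin 0 => i.elim0) e') =
        DirectSum.lof k (Fin 1) (fun s' : Fin 1 => Xc k A H E (0 - (s' : ℕ)) (s' : ℕ)) 0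
          (xgen e (fun i : Fin 0 => i.elim0) (fun i : Fin 0 => i.elim0) e'))
    (hphiS : ∀ (n : ℕ) (s : Fin (n + 2)) (e : E) (hs : Fin (s : ℕ) → H)
      (as : Fin (n + 1 - (s : ℕ)) → A),
      phi (n + 1) (DirectSum.lof k (Fin (n + 2))
          (fun s' : Fin (n + 2) => Xc k A H E (n + 1 - (s' : ℕ)) (s' : ℕ)) s
          (xgen e hs as (1 : E))) =
        xi n (phi n (dT R n (DirectSum.lof k (Fin (n + 2))
          (fun s' : Fin (n + 2) => Xc k A H E (n + 1 - (s' : ℕ)) (s' : ℕ)) s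
          (xgen e hs as (1 : E))))))
    (hpsiS : ∀ (n : ℕ) (e : E) (xs : Fin (n + 1) → E),
      psi (n + 1) (bgen e xs (1 : E)) =
        sbar R slY slX sY n (psi n (bp n (bgen e xs (1 : E)))))
    (hphiR : ∀ (n : ℕ) (e : E), phi n ∘ₗ rT e n = rB e ∘ₗ phi n)
    (hpsiR : ∀ (n : ℕ) (e : E), psi n ∘ₗ rB e = rT e n ∘ₗ psi n)
    (om : ∀ n : ℕ, Bch k E n →ₗ[k] Bch k E (n + 1))
    (hom0 : om 0 = 0)
    (homS : ∀ (n : ℕ) (e : E) (xs : Fin (n + 1) → E),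
      om (n + 1) (bgen e xs (1 : E)) =
        xi (n + 1) (phi (n + 1) (psi (n + 1) (bgen e xs (1 : E)))
          - bgen e xs (1 : E) - om n (bp n (bgen e xs (1 : E)))))
    (homR : ∀ (n : ℕ) (e : E), om n ∘ₗ rB e = rB e ∘ₗ om n) :
    (∀ (i n : ℕ) (x : XT k A H E n), x ∈ FX k A H E i n → phi n x ∈ FB S i n) ∧
    (∀ (i n : ℕ) (y : Bch k E n), y ∈ FB S i n → psi n y ∈ FX k A H E i n) ∧
    (∀ (i n : ℕ) (y : Bch k E n), y ∈ FB S i n → om n y ∈ FB S i (n + 1)) := by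
  have hphi := refinedFX_le_comap_phi (S := S) hxi (fun e => hphi0 e 1)
    (fun n γ => hphiS n γ.1 γ.2.1 γ.2.2.1 γ.2.2.2) hphiR
  have hpsi := refinedFB_le_comap_psi hbp hsY hslY0 hslX0 (fun e => hpsi0 e 1) hpsiS hpsiR
  have hom := refinedFB_le_comap_om hbp hxi (fun n => hphi n _) (fun n => hpsi n _) hom0 homS homR
  simp only [FX_eq_refinedFX_univ, FB_eq_refinedFB_univ]
  exact ⟨fun i n _ hx => hphi n _ i hx, fun i n _ hy => hpsi n _ i hy,
    fun i n _ hy => hom n _ i hy⟩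

end Statement5

end HopfCrossed
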